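/- arXiv:1902.06127 — 2 statements merged into one kernel-verified Lean document; each statement's English description precedes it below -/
import Mathlib

section
/- For every 0 ≤ e ≤ 1 and every c > 0, the map σ^{e,c} is Lipschitz continuous on ℝ with Lipschitz constant c^{e−1}, i.e. |σ^{e,c}(a) − σ^{e,c}(b)| ≤ c^{e−1}·|a − b| for all a, b ∈ ℝ. Consequently, if l : ℝ → ℝ is L-Lipschitz (L > 0), then the e-exponentiated loss l ∘ σ^{e,c} is (c^{e−1}·L)-Lipschitz on ℝ. -/
/-- The `e`-exponentiated transformation `σ^{e,c}`. -/
noncomputable def sigmaE (e c : ℝ) (x : ℝ) : ℝ :=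
  if c ≤ |x| then (if 0 ≤ x then (1 : ℝ) else -1) * |x| ^ e else c ^ (e - 1) * x

theorem sigmaE_of_nonneg_of_le {e c x : ℝ} (hx : 0 ≤ x) (h : c ≤ x) : sigmaE e c x = x ^ e := by
  simp [sigmaE, abs_of_nonneg hx, h, hx]

theorem sigmaE_of_nonneg_of_lt {e c x : ℝ} (hx : 0 ≤ x) (h : x < c) :
    sigmaE e c x = c ^ (e - 1) * x := by
  simp [sigmaE, abs_of_nonneg hx, not_le.mpr h]

theorem sigmaE_neg {e c : ℝ} (hc : 0 < c) (x : ℝ) : sigmaE e c (-x) = -sigmaE e c x := by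
  unfold sigmaE
  rw [abs_neg]
  split_ifs with h h₁ h₂ h₂
  · have hx : x = 0 := by linarith
    rw [hx, abs_zero] at h
    linarith
  · ring
  · ring
  · linarith
  · ring

theorem rpow_eq_rpow_sub_one_mul {x : ℝ} (hx : 0 < x) (e : ℝ) : x ^ e = x ^ (e - 1) * x := by
  rw [Real.rpow_sub_one hx.ne', div_mul_cancel₀ _ hx.ne']

/-- Chord bound for the concave power function, with the slope taken at the left endpoint. -/
theorem rpow_sub_rpow_le {e x y : ℝ} (he₁ : e ≤ 1) (hy : 0 < y) (hyx : y ≤ x) :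
    x ^ e - y ^ e ≤ y ^ (e - 1) * (x - y) := by
  have hx : 0 < x := hy.trans_le hyx
  have hpow : x ^ (e - 1) ≤ y ^ (e - 1) :=
    Real.rpow_le_rpow_of_nonpos hy hyx (by linarith)
  rw [rpow_eq_rpow_sub_one_mul hx, rpow_eq_rpow_sub_one_mul hy]
  nlinarith [mul_le_mul_of_nonneg_right hpow hx.le]

theorem sigmaE_monotone {e c : ℝ} (he₀ : 0 ≤ e) (hc : 0 < c) : Monotone (sigmaE e c) := by
  refine monotone_of_odd_of_monotoneOn_nonneg (sigmaE_neg hc) fun y hy x hx hyx => ?_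
  rw [Set.mem_Ici] at hx hy
  have hK : 0 ≤ c ^ (e - 1) := Real.rpow_nonneg hc.le _
  rcases lt_or_ge x c with hxc | hxc
  · rw [sigmaE_of_nonneg_of_lt hx hxc, sigmaE_of_nonneg_of_lt hy (hyx.trans_lt hxc)]
    exact mul_le_mul_of_nonneg_left hyx hK
  · rw [sigmaE_of_nonneg_of_le hx hxc]
    rcases lt_or_ge y c with hyc | hyc
    · rw [sigmaE_of_nonneg_of_lt hy hyc]
      calc c ^ (e - 1) * y ≤ c ^ (e - 1) * c := mul_le_mul_of_nonneg_left hyc.le hK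
        _ = c ^ e := (rpow_eq_rpow_sub_one_mul hc e).symm
        _ ≤ x ^ e := Real.rpow_le_rpow hc.le hxc he₀
    · rw [sigmaE_of_nonneg_of_le hy hyc]
      exact Real.rpow_le_rpow hy hyx he₀

theorem mul_sub_sigmaE_monotone {e c : ℝ} (he₁ : e ≤ 1) (hc : 0 < c) :
    Monotone fun x => c ^ (e - 1) * x - sigmaE e c x := by
  refine monotone_of_odd_of_monotoneOn_nonneg
    (fun x => by rw [sigmaE_neg hc]; ring) fun y hy x hx hyx => ?_
  rw [Set.mem_Ici] at hx hy
  rcases lt_or_ge x c with hxc | hxc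
  · rw [sigmaE_of_nonneg_of_lt hx hxc, sigmaE_of_nonneg_of_lt hy (hyx.trans_lt hxc)]
    simp
  · rw [sigmaE_of_nonneg_of_le hx hxc]
    rcases lt_or_ge y c with hyc | hyc
    · rw [sigmaE_of_nonneg_of_lt hy hyc]
      have h := rpow_sub_rpow_le he₁ hc hxc
      rw [rpow_eq_rpow_sub_one_mul hc e] at h
      linarith
    · rw [sigmaE_of_nonneg_of_le hy hyc]
      have h := rpow_sub_rpow_le he₁ (hc.trans_le hyc) hyx
      have hpow : y ^ (e - 1) ≤ c ^ (e - 1) :=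
        Real.rpow_le_rpow_of_nonpos hc hyc (by linarith)
      have := mul_le_mul_of_nonneg_right hpow (sub_nonneg.mpr hyx)
      linarith

theorem abs_sigmaE_sub_le {e c : ℝ} (he₀ : 0 ≤ e) (he₁ : e ≤ 1) (hc : 0 < c) (a b : ℝ) :
    |sigmaE e c a - sigmaE e c b| ≤ c ^ (e - 1) * |a - b| := by
  wlog hba : b ≤ a generalizing a b
  · rw [abs_sub_comm, abs_sub_comm a]
    exact this b a (le_of_not_ge hba)
  have hmono := sigmaE_monotone he₀ hc hba
  have hsub := mul_sub_sigmaE_monotone he₁ hc hba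
  rw [abs_of_nonneg (sub_nonneg.mpr hmono), abs_of_nonneg (sub_nonneg.mpr hba)]
  dsimp only at hsub
  linarith

/-- For `0 ≤ e ≤ 1` and `c > 0`, the map `σ^{e,c}` is Lipschitz on `ℝ` with constant
`c^(e-1)`, and consequently for any `L`-Lipschitz loss `l : ℝ → ℝ` (`L > 0`), the
`e`-exponentiated loss `l ∘ σ^{e,c}` is `(c^(e-1)·L)`-Lipschitz on `ℝ`. -/
theorem sigmaE_lipschitz (e c : ℝ) (he₀ : 0 ≤ e) (he₁ : e ≤ 1) (hc : 0 < c) :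
    (∀ a b : ℝ, |sigmaE e c a - sigmaE e c b| ≤ c ^ (e - 1) * |a - b|) ∧
    (∀ (l : ℝ → ℝ) (L : ℝ), 0 < L → (∀ a b : ℝ, |l a - l b| ≤ L * |a - b|) →
      ∀ a b : ℝ, |l (sigmaE e c a) - l (sigmaE e c b)| ≤ c ^ (e - 1) * L * |a - b|) := by
  refine ⟨abs_sigmaE_sub_le he₀ he₁ hc, fun l L hL hl a b => ?_⟩
  calc |l (sigmaE e c a) - l (sigmaE e c b)|
      ≤ L * |sigmaE e c a - sigmaE e c b| := hl _ _
    _ ≤ L * (c ^ (e - 1) * |a - b|) :=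
      mul_le_mul_of_nonneg_left (abs_sigmaE_sub_le he₀ he₁ hc a b) hL.le
    _ = c ^ (e - 1) * L * |a - b| := by ring
end

section
/- Let l : ℝ → ℝ be a convex differentiable function whose derivative l′ satisfies l′(t) ≤ 0 for all t ∈ ℝ, let 0 ≤ e < 1 and 0 < c ≤ 1, and let ŷ < −1. Then l ∘ σ^{e,c} is differentiable at ŷ with derivative e·|ŷ|^{e−1}·l′(σ^{e,c}(ŷ)), and |e·|ŷ|^{e−1}·l′(σ^{e,c}(ŷ))| ≤ |l′(ŷ)|; moreover the inequality is strict whenever l′(ŷ) < 0. (This expresses that the e-exponentiated loss has strictly smaller slope than the original convex loss at large negative margins, making it more robust to outliers.) -/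
theorem sigmaE_of_lt_neg_one {e c x : ℝ} (hc : c ≤ 1) (hx : x < -1) :
    sigmaE e c x = -(-x) ^ e := by
  have hneg : ¬ 0 ≤ x := by linarith
  have habs : |x| = -x := abs_of_neg (by linarith)
  have hcx : c ≤ -x := by linarith
  simp [sigmaE, hneg, habs, hcx]

theorem hasDerivAt_sigmaE_of_lt_neg_one {e c x : ℝ} (hc : c ≤ 1) (hx : x < -1) :
    HasDerivAt (sigmaE e c) (e * |x| ^ (e - 1)) x := by
  have hpow : HasDerivAt (fun t : ℝ => -(-t) ^ e) (e * |x| ^ (e - 1)) x := by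
    have h := ((hasDerivAt_neg x).rpow_const (p := e) (Or.inl (by linarith))).neg
    rw [abs_of_neg (by linarith : x < 0)]
    exact h.congr_deriv (by ring)
  refine hpow.congr_of_eventuallyEq ?_
  filter_upwards [Iio_mem_nhds hx] with t ht
  exact sigmaE_of_lt_neg_one hc ht

theorem le_sigmaE_of_lt_neg_one {e c x : ℝ} (he : e ≤ 1) (hc : c ≤ 1) (hx : x < -1) :
    x ≤ sigmaE e c x := by
  have h := Real.rpow_le_rpow_of_exponent_le (by linarith : 1 ≤ -x) he
  rw [Real.rpow_one] at h
  rw [sigmaE_of_lt_neg_one hc hx]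
  linarith

/-- Let `l : ℝ → ℝ` be a convex differentiable loss whose derivative is everywhere
nonpositive, let `0 ≤ e < 1`, `0 < c ≤ 1`, and `ŷ < -1`.  Then the `e`-exponentiated loss
`l ∘ σ^{e,c}` is differentiable at `ŷ` with derivative `e·|ŷ|^(e-1)·l′(σ^{e,c}(ŷ))`, whose
absolute value is at most `|l′(ŷ)|`, strictly so when `l′(ŷ) < 0`. -/
theorem exponentiated_loss_smaller_slope (l : ℝ → ℝ)
    (hconv : ConvexOn ℝ Set.univ l) (hdiff : Differentiable ℝ l)
    (hderiv : ∀ t : ℝ, deriv l t ≤ 0)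
    (e c : ℝ) (he₀ : 0 ≤ e) (he₁ : e < 1) (hc₀ : 0 < c) (hc₁ : c ≤ 1)
    (yhat : ℝ) (hy : yhat < -1) :
    HasDerivAt (l ∘ sigmaE e c) (e * |yhat| ^ (e - 1) * deriv l (sigmaE e c yhat)) yhat ∧
    |e * |yhat| ^ (e - 1) * deriv l (sigmaE e c yhat)| ≤ |deriv l yhat| ∧
    (deriv l yhat < 0 →
      |e * |yhat| ^ (e - 1) * deriv l (sigmaE e c yhat)| < |deriv l yhat|) := by
  have hfactor_nonneg : 0 ≤ e * |yhat| ^ (e - 1) := by positivity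
  have hfactor_lt_one : e * |yhat| ^ (e - 1) < 1 := by
    have hpow : |yhat| ^ (e - 1) ≤ 1 :=
      Real.rpow_le_one_of_one_le_of_nonpos
        (by rw [abs_of_neg (by linarith)]; linarith) (by linarith)
    exact (mul_le_of_le_one_right he₀ hpow).trans_lt he₁
  have hmono : deriv l yhat ≤ deriv l (sigmaE e c yhat) :=
    hconv.monotoneOn_deriv (fun t _ => hdiff t) (Set.mem_univ _) (Set.mem_univ _)
      (le_sigmaE_of_lt_neg_one he₁.le hc₁ hy)
  have hσ := hderiv (sigmaE e c yhat)
  refine ⟨?_, ?_, fun hlt => ?_⟩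
  · rw [mul_comm]
    exact (hdiff _).hasDerivAt.comp yhat (hasDerivAt_sigmaE_of_lt_neg_one hc₁ hy)
  · rw [abs_mul, abs_of_nonneg hfactor_nonneg, abs_of_nonpos hσ, abs_of_nonpos (hderiv yhat)]
    nlinarith
  · rw [abs_mul, abs_of_nonneg hfactor_nonneg, abs_of_nonpos hσ, abs_of_nonpos hlt.le]
    nlinarith
end
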